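/- arXiv:2306.02638 — 2 statements merged into one kernel-verified Lean document; each statement's English description precedes it below -/
import Mathlib

section
/- Let X be a reflexive Banach space over 𝕂 (𝕂 = ℝ or ℂ), let Y be a Banach space, and let T, A : X → Y be compact linear operators. Then T ⊥_B A (with respect to the operator norm) if and only if 0 ∈ conv{ y*(Ax) : x is an extreme point of the closed unit ball of X, y* is an extreme point of the closed unit ball of Y*, y*(Tx) = ‖T‖ }. -/
open Filter Topology Metric

/-!
Let `R ⊆ 𝕜 × 𝕜` be the set of pairs `(y (T x), y (A x))` with `x` and `y` in the unit balls of `X`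
and of the dual of `Y`. Since `‖μ • T + ν • A‖` is the supremum of `re (μ * a + ν * b)` over
`(a, b) ∈ R`, the Hahn-Banach theorem identifies Birkhoff-James orthogonality with
`(‖T‖, 0) ∈ closure (convexHull ℝ R)`. For compact operators on a reflexive space the pair depends
continuously on `(x, y)` in the weak topology of the ball of `X` and the weak-star topology of the
dual ball, so `R` and its convex hull are compact. For fixed `x` or fixed `y` the pairs form a
linear image of a compact convex set, so by Minkowski's theorem extreme points suffice to generate
the hull. Finally `‖a‖ ≤ ‖T‖` on `R`, so in a convex combination equal to `(‖T‖, 0)` only pairs with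
`y (T x) = ‖T‖` can occur.
-/

theorem convexHull_eq_iUnion_image_stdSimplex {𝕜 E : Type*} [Field 𝕜] [LinearOrder 𝕜]
    [IsStrictOrderedRing 𝕜] [AddCommGroup E] [Module 𝕜 E] [FiniteDimensional 𝕜 E] (s : Set E) :
    convexHull 𝕜 s = ⋃ k ∈ Set.Iic (Module.finrank 𝕜 E + 1),
      (fun p : (Fin k → 𝕜) × (Fin k → E) => ∑ i, p.1 i • p.2 i) ''
        (stdSimplex 𝕜 (Fin k) ×ˢ Set.univ.pi fun _ => s) := by
  apply Set.Subset.antisymm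
  · intro x hx
    obtain ⟨ι, _, z, w, hz, hind, hw, hw1, rfl⟩ := eq_pos_convex_span_of_mem_convexHull hx
    have hcard : Fintype.card ι ≤ Module.finrank 𝕜 E + 1 :=
      hind.card_le_finrank_succ.trans (Nat.add_le_add_right (Submodule.finrank_le _) 1)
    let e := (Fintype.equivFin ι).symm
    refine Set.mem_biUnion hcard ⟨(w ∘ e, z ∘ e), ⟨⟨fun i => (hw _).le, ?_⟩, fun i _ => ?_⟩, ?_⟩
    · exact (e.sum_comp w).trans hw1
    · exact hz (Set.mem_range_self _)
    · exact e.sum_comp fun i => w i • z i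
  · refine Set.iUnion₂_subset fun k _ => ?_
    rintro _ ⟨⟨w, z⟩, ⟨hw, hz⟩, rfl⟩
    exact (convex_convexHull 𝕜 s).sum_mem (fun i _ => hw.1 i) hw.2
      fun i _ => subset_convexHull 𝕜 s (hz i (Set.mem_univ i))

theorem isCompact_convexHull_of_finiteDimensional {E : Type*} [AddCommGroup E] [Module ℝ E]
    [FiniteDimensional ℝ E] [TopologicalSpace E] [ContinuousAdd E] [ContinuousSMul ℝ E] {s : Set E}
    (hs : IsCompact s) : IsCompact (convexHull ℝ s) := by
  rw [convexHull_eq_iUnion_image_stdSimplex]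
  refine (Set.finite_Iic _).isCompact_biUnion fun k _ => ?_
  exact ((isCompact_stdSimplex ℝ (Fin k)).prod (isCompact_univ_pi fun _ => hs)).image
    (by fun_prop)

theorem mem_convexHull_setOf_eq_of_forall_le {𝕜 E : Type*} [Field 𝕜] [LinearOrder 𝕜]
    [IsStrictOrderedRing 𝕜] [AddCommGroup E] [Module 𝕜 E] {s : Set E} (g : E →ₗ[𝕜] 𝕜) {c : 𝕜}
    (hg : ∀ x ∈ s, g x ≤ c) {p : E} (hp : p ∈ convexHull 𝕜 s) (hpc : g p = c) :
    p ∈ convexHull 𝕜 {x ∈ s | g x = c} := by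
  let F := {p | g p ≤ c ∧ (g p = c → p ∈ convexHull 𝕜 {x ∈ s | g x = c})}
  have hF : Convex 𝕜 F := by
    refine convex_iff_openSegment_subset.2 fun x ⟨hx, hxc⟩ y ⟨hy, hyc⟩ => ?_
    rintro _ ⟨a, b, ha, hb, hab, rfl⟩
    have hgz : g (a • x + b • y) = a * g x + b * g y := by simp
    have hz : a * c + b * c = c := by rw [← add_mul, hab, one_mul]
    have hax := mul_le_mul_of_nonneg_left hx ha.le
    have hby := mul_le_mul_of_nonneg_left hy hb.le
    refine ⟨hgz.trans_le ((add_le_add hax hby).trans_eq hz), fun h => ?_⟩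
    rw [hgz, ← hz, add_eq_add_iff_eq_and_eq hax hby, mul_right_inj' ha.ne',
      mul_right_inj' hb.ne'] at h
    exact convex_convexHull 𝕜 _ (hxc h.1) (hyc h.2) ha.le hb.le hab
  have hsF : s ⊆ F := fun x hx => ⟨hg x hx, fun h => subset_convexHull 𝕜 _ ⟨hx, h⟩⟩
  exact (convexHull_min hsF hF hp).2 hpc

theorem eq_ofReal_of_norm_le_of_re_eq {𝕜 : Type*} [RCLike 𝕜] {z : 𝕜} {r : ℝ} (hz : ‖z‖ ≤ r)
    (hre : RCLike.re z = r) : z = r := by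
  have h : ‖z‖ ≤ RCLike.re z := hz.trans_eq hre.symm
  rw [← RCLike.re_eq_self_of_le h, hre]

theorem ofReal_mk_mem_convexHull_iff {𝕜 F : Type*} [RCLike 𝕜] [AddCommGroup F] [Module ℝ F]
    {R : Set (𝕜 × F)} {r : ℝ} (hR : ∀ p ∈ R, ‖p.1‖ ≤ r) {b : F} :
    ((r : 𝕜), b) ∈ convexHull ℝ R ↔ b ∈ convexHull ℝ (Prod.mk (r : 𝕜) ⁻¹' R) := by
  constructor
  · intro h
    let g : 𝕜 × F →ₗ[ℝ] ℝ := RCLike.reLm ∘ₗ LinearMap.fst ℝ 𝕜 F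
    have hg : ∀ p ∈ R, g p ≤ r := fun p hp => (RCLike.re_le_norm _).trans (hR p hp)
    have hface := mem_convexHull_setOf_eq_of_forall_le g hg h (RCLike.ofReal_re r)
    have hsnd := Set.mem_image_of_mem (LinearMap.snd ℝ 𝕜 F) hface
    rw [LinearMap.image_convexHull] at hsnd
    refine convexHull_mono ?_ hsnd
    rintro _ ⟨⟨a, b⟩, ⟨hab, hre⟩, rfl⟩
    obtain rfl : a = r := eq_ofReal_of_norm_le_of_re_eq (hR _ hab) hre
    exact hab
  · intro h
    let j : F →ᵃ[ℝ] 𝕜 × F := (AffineMap.const ℝ F (r : 𝕜)).prod (AffineMap.id ℝ F)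
    have hj := Set.mem_image_of_mem j h
    rw [AffineMap.image_convexHull] at hj
    exact convexHull_mono (Set.image_preimage_subset j R) hj

theorem image_extremePoints_of_injective {𝕜 E F : Type*} [Ring 𝕜] [PartialOrder 𝕜]
    [AddRightMono 𝕜] [AddCommGroup E] [Module 𝕜 E] [AddCommGroup F] [Module 𝕜 F]
    (f : E →ᵃ[𝕜] F) (hf : Function.Injective f) (s : Set E) :
    f '' s.extremePoints 𝕜 = (f '' s).extremePoints 𝕜 := by
  have hmem (x : E) : f x ∈ (f '' s).extremePoints 𝕜 ↔ x ∈ s.extremePoints 𝕜 := by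
    simp only [mem_extremePoints_iff_left, Set.forall_mem_image, ← image_openSegment,
      hf.mem_set_image, hf.eq_iff]
  refine Set.Subset.antisymm (Set.image_subset_iff.2 fun x hx => (hmem x).2 hx) fun y hy => ?_
  obtain ⟨x, -, rfl⟩ := hy.1
  exact Set.mem_image_of_mem f ((hmem x).1 hy)

section Minkowski

variable {E : Type*} [NormedAddCommGroup E] [NormedSpace ℝ E] [FiniteDimensional ℝ E] {s : Set E}

theorem exists_ne_zero_forall_le_of_notMem_of_mem_closure (hs : Convex ℝ s) {p : E}
    (hp : p ∉ s) (hp' : p ∈ closure s) : ∃ f : StrongDual ℝ E, f ≠ 0 ∧ ∀ x ∈ s, f x ≤ f p := by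
  by_cases hint : (interior s).Nonempty
  · exact geometric_hahn_banach_of_nonempty_interior_point hs (fun h => hp (interior_subset h)) hint
  obtain ⟨q, hq⟩ : s.Nonempty := closure_nonempty_iff.1 ⟨p, hp'⟩
  have hspan : (affineSpan ℝ s).direction < ⊤ := by
    rwa [lt_top_iff_ne_top, Ne, AffineSubspace.direction_eq_top_iff_of_nonempty
      ⟨q, subset_affineSpan ℝ s hq⟩, ← hs.interior_nonempty_iff_affineSpan_eq_top]
  obtain ⟨f, hf, hfs⟩ := Submodule.exists_le_ker_of_lt_top _ hspan
  have hconst : s ⊆ {x | f x = f q} := fun x hx => by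
    have := hfs (AffineSubspace.vsub_mem_direction (subset_affineSpan ℝ s hx)
      (subset_affineSpan ℝ s hq))
    simpa [sub_eq_zero] using this
  have hpq : f p = f q := closure_minimal hconst
    (isClosed_eq f.continuous_of_finiteDimensional continuous_const) hp'
  exact ⟨f.toContinuousLinearMap, by simpa using hf, fun x hx => ((hconst hx).trans hpq.symm).le⟩

theorem subset_convexHull_extremePoints (hs : IsCompact s) (hc : Convex ℝ s) :
    s ⊆ convexHull ℝ (s.extremePoints ℝ) := by
  induction hn : Module.finrank ℝ E using Nat.strong_induction_on generalizing E with
  | _ n ih =>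
  intro p hp
  by_contra hpe
  have hcl := closure_convexHull_extremePoints hs hc
  obtain ⟨f, hf, hle⟩ := exists_ne_zero_forall_le_of_notMem_of_mem_closure
    (convex_convexHull ℝ _) hpe (hcl.ge hp)
  have hle' : ∀ x ∈ s, f x ≤ f p :=
    hcl.ge.trans (closure_minimal hle (isClosed_le f.continuous continuous_const))
  -- The face exposed by `f` lies in the hyperplane `p + ker f`, where induction applies.
  let face := f.toExposed s
  have hface : IsExposed ℝ s face := ContinuousLinearMap.toExposed.isExposed
  let j : f.ker →ᵃ[ℝ] E := f.ker.subtype.toAffineMap + AffineMap.const ℝ f.ker p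
  have hj : IsClosedEmbedding j :=
    (Homeomorph.addRight p).isClosedEmbedding.comp f.isClosed_ker.isClosedEmbedding_subtypeVal
  have hj0 : j 0 = p := zero_add p
  have hrange : face ⊆ Set.range j := fun x hx =>
    ⟨⟨x - p, by simp [(hle' x hx.1).antisymm (hx.2 p hp)]⟩, sub_add_cancel x p⟩
  have hker : Module.finrank ℝ f.ker < n := by
    rw [← hn]
    exact Submodule.finrank_lt fun h =>
      hf (ContinuousLinearMap.coe_inj.1 (LinearMap.ker_eq_top.1 h))
  have hmem : (0 : f.ker) ∈ convexHull ℝ ((j ⁻¹' face).extremePoints ℝ) :=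
    ih _ hker (hj.isCompact_preimage (hface.isCompact hs)) ((hface.convex hc).affine_preimage j) rfl
      (by rw [Set.mem_preimage, hj0]; exact ⟨hp, hle'⟩)
  have hmem' := Set.mem_image_of_mem j hmem
  rw [AffineMap.image_convexHull, image_extremePoints_of_injective j hj.injective,
    Set.image_preimage_eq_of_subset hrange, hj0] at hmem'
  exact hpe (convexHull_mono hface.isExtreme.extremePoints_subset_extremePoints hmem')

end Minkowski

section LinearImage

variable {E : Type*} [NormedAddCommGroup E] [NormedSpace ℝ E] [FiniteDimensional ℝ E]

theorem image_subset_convexHull_image_extremePoints {V : Type*} [AddCommGroup V] [Module ℝ V]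
    [TopologicalSpace V] [T2Space V] [IsTopologicalAddGroup V] [ContinuousSMul ℝ V]
    [LocallyConvexSpace ℝ V] {s : Set V} (hs : IsCompact s) (hc : Convex ℝ s) (L : V →L[ℝ] E) :
    L '' s ⊆ convexHull ℝ (L '' s.extremePoints ℝ) :=
  (subset_convexHull_extremePoints (hs.image L.continuous) (hc.linear_image L.toLinearMap)).trans
    (convexHull_mono (surjOn_extremePoints_image L.toContinuousAffineMap hs))

theorem image_subset_convexHull_image_extremePoints_of_linearEquiv {U V : Type*} [AddCommGroup U]
    [Module ℝ U] [AddCommGroup V] [Module ℝ V] [TopologicalSpace V] [T2Space V]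
    [IsTopologicalAddGroup V] [ContinuousSMul ℝ V] [LocallyConvexSpace ℝ V] (e : U ≃ₗ[ℝ] V)
    {s : Set U} (hs : IsCompact (e.symm ⁻¹' s)) (hc : Convex ℝ s) (L : U →ₗ[ℝ] E)
    (hL : Continuous (L ∘ₗ e.symm.toLinearMap)) :
    L '' s ⊆ convexHull ℝ (L '' s.extremePoints ℝ) := by
  rw [← e.image_eq_preimage_symm] at hs
  have hsub := image_subset_convexHull_image_extremePoints hs (hc.linear_image e.toLinearMap)
    ⟨L ∘ₗ e.symm.toLinearMap, hL⟩
  rw [← image_extremePoints, Set.image_image, Set.image_image] at hsub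
  simpa only [ContinuousLinearMap.coe_mk', LinearMap.comp_apply, LinearEquiv.coe_coe,
    e.symm_apply_apply] using hsub

variable {𝕜 W : Type*} [RCLike 𝕜] [NormedAddCommGroup W] [NormedSpace 𝕜 W]

theorem image_closedBall_dual_subset_convexHull_image_extremePoints (L : StrongDual 𝕜 W →ₗ[ℝ] E)
    (hL : Continuous (X := WeakDual 𝕜 W) L) (r : ℝ) :
    L '' closedBall 0 r ⊆ convexHull ℝ (L '' (closedBall 0 r).extremePoints ℝ) := by
  have : LocallyConvexSpace ℝ (WeakDual 𝕜 W) :=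
    WeakBilin.locallyConvexSpace (B := topDualPairing 𝕜 W)
  let e : StrongDual 𝕜 W ≃ₗ[ℝ] WeakDual 𝕜 W :=
    { StrongDual.toWeakDual (𝕜 := 𝕜) (E := W) with map_smul' := fun _ _ => rfl }
  exact image_subset_convexHull_image_extremePoints_of_linearEquiv e
    (WeakDual.isCompact_closedBall 0 r) (convex_closedBall 0 r) L hL

theorem isCompact_closedBall_weakSpace_of_reflexive
    (hrefl : Function.Surjective (NormedSpace.inclusionInDoubleDual 𝕜 W)) (r : ℝ) :
    IsCompact ((toWeakSpace 𝕜 W).symm ⁻¹' closedBall 0 r) := by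
  have hpre : (toWeakSpace 𝕜 W).symm ⁻¹' closedBall 0 r =
      NormedSpace.inclusionInDoubleDualWeak 𝕜 W ⁻¹' (WeakDual.toStrongDual ⁻¹' closedBall 0 r) := by
    ext x
    rw [Set.mem_preimage, mem_closedBall_zero_iff,
      ← (NormedSpace.inclusionInDoubleDualLi 𝕜).norm_map ((toWeakSpace 𝕜 W).symm x)]
    exact (mem_closedBall_zero_iff (E := StrongDual 𝕜 (StrongDual 𝕜 W))).symm
  rw [hpre]
  refine (NormedSpace.isEmbedding_inclusionInDoubleDualWeak 𝕜 W).isCompact_preimage'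
    (WeakDual.isCompact_closedBall 0 r) fun z _ => ?_
  exact hrefl z

theorem image_closedBall_subset_convexHull_image_extremePoints_of_reflexive [NormedSpace ℝ W]
    [IsScalarTower ℝ 𝕜 W]
    (hrefl : Function.Surjective (NormedSpace.inclusionInDoubleDual 𝕜 W)) (L : W →ₗ[ℝ] E)
    (hL : Continuous (X := WeakSpace 𝕜 W) L) (r : ℝ) :
    L '' closedBall 0 r ⊆ convexHull ℝ (L '' (closedBall 0 r).extremePoints ℝ) := by
  have : LocallyConvexSpace ℝ (WeakSpace 𝕜 W) :=
    WeakBilin.locallyConvexSpace (B := (topDualPairing 𝕜 W).flip)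
  have : ContinuousSMul ℝ (WeakSpace 𝕜 W) := IsScalarTower.continuousSMul 𝕜
  exact image_subset_convexHull_image_extremePoints_of_linearEquiv
    ((toWeakSpace 𝕜 W).restrictScalars ℝ) (isCompact_closedBall_weakSpace_of_reflexive hrefl r)
    (convex_closedBall 0 r) L hL

end LinearImage

section JointRange

variable {𝕜 X Y : Type*} [RCLike 𝕜] [NormedAddCommGroup X] [NormedSpace 𝕜 X]
  [NormedAddCommGroup Y] [NormedSpace 𝕜 Y]

theorem continuousOn_weakSpace_closedBall_of_isCompactOperator {S : X →L[𝕜] Y}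
    (hS : IsCompactOperator S) (r : ℝ) :
    ContinuousOn (fun x : WeakSpace 𝕜 X => S ((toWeakSpace 𝕜 X).symm x))
      ((toWeakSpace 𝕜 X).symm ⁻¹' closedBall 0 r) := by
  obtain ⟨K, hK, hSK⟩ := hS.image_closedBall_subset_compact (f := S.toLinearMap) r
  have : CompactSpace K := isCompact_iff_compactSpace.1 hK
  -- On the compact set `K` the weak topology coincides with the norm topology.
  have hemb : IsClosedEmbedding fun y : K => toWeakSpaceCLM 𝕜 Y y :=
    ((toWeakSpaceCLM 𝕜 Y).continuous.comp continuous_subtype_val).isClosedEmbedding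
      ((toWeakSpace 𝕜 Y).injective.comp Subtype.val_injective)
  rw [continuousOn_iff_continuous_domRestrict]
  let Sr : (toWeakSpace 𝕜 X).symm ⁻¹' closedBall (0 : X) r → K := fun x =>
    ⟨S ((toWeakSpace 𝕜 X).symm x), hSK (Set.mem_image_of_mem _ x.2)⟩
  have hSr : Continuous Sr := hemb.continuous_iff.2
    ((WeakSpace.map S).continuous.comp continuous_subtype_val)
  exact continuous_subtype_val.comp hSr

theorem continuousOn_weakDual_apply (K : NNReal) :
    ContinuousOn (fun p : WeakDual 𝕜 Y × Y => p.1 p.2)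
      ((WeakDual.toStrongDual ⁻¹' closedBall 0 K) ×ˢ Set.univ) := by
  refine continuousOn_prod_of_continuousOn_lipschitzOnWith' _ K (fun y hy => ?_)
    fun w _ => (WeakDual.eval_continuous w).continuousOn
  have hy' : ‖WeakDual.toStrongDual y‖₊ ≤ K := mem_closedBall_zero_iff.1 hy
  exact ((WeakDual.toStrongDual y).lipschitz.weaken hy').lipschitzOnWith

theorem continuousOn_apply_of_isCompactOperator {S : X →L[𝕜] Y} (hS : IsCompactOperator S) :
    ContinuousOn (fun p : WeakSpace 𝕜 X × WeakDual 𝕜 Y => p.2 (S ((toWeakSpace 𝕜 X).symm p.1)))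
      (((toWeakSpace 𝕜 X).symm ⁻¹' closedBall 0 1) ×ˢ (WeakDual.toStrongDual ⁻¹' closedBall 0 1)) :=
  (continuousOn_weakDual_apply 1).comp
    (continuousOn_snd.prodMk ((continuousOn_weakSpace_closedBall_of_isCompactOperator hS 1).comp
      continuousOn_fst fun _ hp => hp.1))
    fun _ hp => ⟨hp.2, Set.mem_univ _⟩

/-- The joint values `(y (T x), y (A x))` for `x ∈ s` and `y ∈ t`: a spatial numerical range of the
pair of operators `T`, `A`. -/
def jointRange (T A : X →L[𝕜] Y) (s : Set X) (t : Set (StrongDual 𝕜 Y)) : Set (𝕜 × 𝕜) :=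
  Set.image2 (fun x y => (y (T x), y (A x))) s t

theorem mk_mem_jointRange {T A : X →L[𝕜] Y} {s : Set X} {t : Set (StrongDual 𝕜 Y)} {a b : 𝕜} :
    (a, b) ∈ jointRange T A s t ↔ ∃ x ∈ s, ∃ y ∈ t, y (T x) = a ∧ y (A x) = b := by
  simp only [jointRange, Set.mem_image2, Prod.mk.injEq]

theorem isCompact_jointRange_closedBall
    (hrefl : Function.Surjective (NormedSpace.inclusionInDoubleDual 𝕜 X)) {T A : X →L[𝕜] Y}
    (hT : IsCompactOperator T) (hA : IsCompactOperator A) :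
    IsCompact (jointRange T A (closedBall 0 1) (closedBall 0 1)) := by
  rw [jointRange, ← Set.image_uncurry_prod]
  exact ((isCompact_closedBall_weakSpace_of_reflexive hrefl 1).prod
    (WeakDual.isCompact_closedBall (0 : StrongDual 𝕜 Y) 1)).image_of_continuousOn
    ((continuousOn_apply_of_isCompactOperator hT).prodMk
      (continuousOn_apply_of_isCompactOperator hA))

theorem jointRange_closedBall_subset_convexHull_jointRange_extremePoints [NormedSpace ℝ X]
    [IsScalarTower ℝ 𝕜 X] (hrefl : Function.Surjective (NormedSpace.inclusionInDoubleDual 𝕜 X))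
    (T A : X →L[𝕜] Y) :
    jointRange T A (closedBall 0 1) (closedBall 0 1) ⊆
      convexHull ℝ (jointRange T A ((closedBall 0 1).extremePoints ℝ)
        ((closedBall 0 1).extremePoints ℝ)) := by
  rintro _ ⟨x, hx, y, hy, rfl⟩
  let atDual : X →ₗ[ℝ] 𝕜 × 𝕜 :=
    ((y.comp T).toLinearMap.prod (y.comp A).toLinearMap).restrictScalars ℝ
  have hatDual : Continuous (X := WeakSpace 𝕜 X) atDual :=
    (WeakBilin.eval_continuous (topDualPairing 𝕜 X).flip (y.comp T)).prodMk
      (WeakBilin.eval_continuous (topDualPairing 𝕜 X).flip (y.comp A))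
  refine convexHull_min ?_ (convex_convexHull ℝ _)
    (image_closedBall_subset_convexHull_image_extremePoints_of_reflexive hrefl atDual hatDual 1
      (Set.mem_image_of_mem atDual hx))
  rintro _ ⟨x', hx', rfl⟩
  let atPoint : StrongDual 𝕜 Y →ₗ[ℝ] 𝕜 × 𝕜 :=
    ((topDualPairing 𝕜 Y).flip (T x') |>.prod ((topDualPairing 𝕜 Y).flip (A x'))).restrictScalars ℝ
  have hatPoint : Continuous (X := WeakDual 𝕜 Y) atPoint :=
    (WeakDual.eval_continuous (T x')).prodMk (WeakDual.eval_continuous (A x'))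
  refine convexHull_mono ?_ (image_closedBall_dual_subset_convexHull_image_extremePoints atPoint
    hatPoint 1 (Set.mem_image_of_mem atPoint hy))
  rintro _ ⟨y', hy', rfl⟩
  exact Set.mem_image2_of_mem hx' hy'

theorem norm_apply_apply_le_opNorm (S : X →L[𝕜] Y) {x : X} (hx : x ∈ closedBall (0 : X) 1)
    {y : StrongDual 𝕜 Y} (hy : y ∈ closedBall (0 : StrongDual 𝕜 Y) 1) : ‖y (S x)‖ ≤ ‖S‖ :=
  calc ‖y (S x)‖ ≤ 1 * ‖S x‖ := y.le_of_opNorm_le (mem_closedBall_zero_iff.1 hy) _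
    _ = ‖S x‖ := one_mul _
    _ ≤ ‖S‖ := S.unit_le_opNorm x (mem_closedBall_zero_iff.1 hx)

theorem re_apply_apply_le_opNorm (S : X →L[𝕜] Y) {x : X} (hx : x ∈ closedBall (0 : X) 1)
    {y : StrongDual 𝕜 Y} (hy : y ∈ closedBall (0 : StrongDual 𝕜 Y) 1) :
    RCLike.re (y (S x)) ≤ ‖S‖ :=
  (RCLike.re_le_norm _).trans (norm_apply_apply_le_opNorm S hx hy)

theorem opNorm_le_of_forall_re_apply_apply_le (S : X →L[𝕜] Y) {c : ℝ}
    (h : ∀ x ∈ closedBall (0 : X) 1, ∀ y ∈ closedBall (0 : StrongDual 𝕜 Y) 1,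
      RCLike.re (y (S x)) ≤ c) : ‖S‖ ≤ c := by
  have hc : 0 ≤ c := by simpa using h 0 (by simp) 0 (by simp)
  refine S.opNorm_le_of_unit_norm hc fun x hx => ?_
  obtain ⟨y, hy, hyx⟩ := exists_dual_vector'' 𝕜 (S x)
  have := h x (by simp [hx]) y (by simpa using hy)
  rwa [hyx, RCLike.ofReal_re] at this

theorem mem_closure_convexHull_jointRange_of_forall_norm_le {T A : X →L[𝕜] Y}
    (h : ∀ lam : 𝕜, ‖T‖ ≤ ‖T + lam • A‖) :
    ((‖T‖ : 𝕜), (0 : 𝕜)) ∈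
      closure (convexHull ℝ (jointRange T A (closedBall 0 1) (closedBall 0 1))) := by
  by_contra hmem
  obtain ⟨f, u, hfu, hu⟩ := RCLike.geometric_hahn_banach_closed_point (𝕜 := 𝕜)
    (convex_convexHull ℝ _).closure isClosed_closure hmem
  set μ := f (1, 0)
  set ν := f (0, 1)
  have hf (a b : 𝕜) : f (a, b) = μ * a + ν * b := by
    rw [mul_comm μ, mul_comm ν, ← smul_eq_mul, ← smul_eq_mul, ← map_smul, ← map_smul, ← map_add]
    simp
  have hle : ‖μ • T + ν • A‖ ≤ u := by
    refine opNorm_le_of_forall_re_apply_apply_le _ fun x hx y hy => ?_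
    have := hfu _ (subset_closure (subset_convexHull ℝ _ (Set.mem_image2_of_mem hx hy)))
    simpa [hf] using this.le
  have hlt : u < ‖μ‖ * ‖T‖ :=
    calc u < RCLike.re (μ * (‖T‖ : 𝕜)) := by simpa only [hf, mul_zero, add_zero] using hu
      _ ≤ ‖μ * (‖T‖ : 𝕜)‖ := RCLike.re_le_norm _
      _ = ‖μ‖ * ‖T‖ := by rw [norm_mul, RCLike.norm_ofReal, abs_norm]
  have hμ : μ ≠ 0 := by
    rintro hμ
    rw [hμ, norm_zero, zero_mul] at hlt
    exact (hlt.trans_le (norm_nonneg _)).not_ge hle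
  refine (hle.trans_lt hlt).not_ge ?_
  calc ‖μ‖ * ‖T‖ ≤ ‖μ‖ * ‖T + (μ⁻¹ * ν) • A‖ := by gcongr; exact h _
    _ = ‖μ • T + ν • A‖ := by
      rw [← norm_smul, smul_add, smul_smul, mul_inv_cancel_left₀ hμ]

theorem forall_norm_le_iff_mem_closure_convexHull_jointRange {T A : X →L[𝕜] Y} :
    (∀ lam : 𝕜, ‖T‖ ≤ ‖T + lam • A‖) ↔ ((‖T‖ : 𝕜), (0 : 𝕜)) ∈
      closure (convexHull ℝ (jointRange T A (closedBall 0 1) (closedBall 0 1))) := by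
  refine ⟨mem_closure_convexHull_jointRange_of_forall_norm_le, fun h lam => ?_⟩
  let g : 𝕜 × 𝕜 →L[ℝ] ℝ := RCLike.reCLM ∘L
    (ContinuousLinearMap.fst 𝕜 𝕜 𝕜 + lam • ContinuousLinearMap.snd 𝕜 𝕜 𝕜).restrictScalars ℝ
  have hg : jointRange T A (closedBall 0 1) (closedBall 0 1) ⊆ {p | g p ≤ ‖T + lam • A‖} := by
    rintro _ ⟨x, hx, y, hy, rfl⟩
    simpa [g] using re_apply_apply_le_opNorm (T + lam • A) hx hy
  have := closure_minimal (convexHull_min hg (convex_halfSpace_le g.toLinearMap.isLinear _))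
    (isClosed_le g.continuous continuous_const) h
  simpa [g] using this

theorem closure_convexHull_jointRange_closedBall [NormedSpace ℝ X] [IsScalarTower ℝ 𝕜 X]
    (hrefl : Function.Surjective (NormedSpace.inclusionInDoubleDual 𝕜 X)) {T A : X →L[𝕜] Y}
    (hT : IsCompactOperator T) (hA : IsCompactOperator A) :
    closure (convexHull ℝ (jointRange T A (closedBall 0 1) (closedBall 0 1))) =
      convexHull ℝ (jointRange T A ((closedBall 0 1).extremePoints ℝ)
        ((closedBall 0 1).extremePoints ℝ)) := by
  have hcomp := isCompact_convexHull_of_finiteDimensional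
    (isCompact_jointRange_closedBall hrefl hT hA)
  rw [hcomp.isClosed.closure_eq]
  exact Set.Subset.antisymm
    (convexHull_min (jointRange_closedBall_subset_convexHull_jointRange_extremePoints hrefl T A)
      (convex_convexHull ℝ _))
    (convexHull_mono (Set.image2_subset extremePoints_subset extremePoints_subset))

end JointRange

theorem BJ_orthogonality_compact_operators_reflexive_general {𝕜 X Y : Type*} [RCLike 𝕜]
    [NormedAddCommGroup X] [NormedSpace 𝕜 X] [NormedSpace ℝ X] [IsScalarTower ℝ 𝕜 X]
    [NormedAddCommGroup Y] [NormedSpace 𝕜 Y]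
    (hrefl : Function.Surjective (NormedSpace.inclusionInDoubleDual 𝕜 X))
    (T A : X →L[𝕜] Y) (hT : IsCompactOperator T) (hA : IsCompactOperator A) :
    (∀ lam : 𝕜, ‖T + lam • A‖ ≥ ‖T‖) ↔
      (0 : 𝕜) ∈ convexHull ℝ {α : 𝕜 |
        ∃ x ∈ Set.extremePoints ℝ (Metric.closedBall (0 : X) 1),
        ∃ y ∈ Set.extremePoints ℝ (Metric.closedBall (0 : Y →L[𝕜] 𝕜) 1),
        y (T x) = (‖T‖ : 𝕜) ∧ y (A x) = α} := by
  have hnorm : ∀ p ∈ jointRange T A ((closedBall 0 1).extremePoints ℝ)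
      ((closedBall 0 1).extremePoints ℝ), ‖p.1‖ ≤ ‖T‖ := by
    rintro _ ⟨x, hx, y, hy, rfl⟩
    exact norm_apply_apply_le_opNorm T hx.1 hy.1
  simp only [ge_iff_le, forall_norm_le_iff_mem_closure_convexHull_jointRange,
    closure_convexHull_jointRange_closedBall hrefl hT hA, ofReal_mk_mem_convexHull_iff hnorm,
    Set.preimage, mk_mem_jointRange]

/-- Birkhoff-James orthogonality of compact operators from a reflexive space, characterized via
extreme points of `B_X` and of the dual unit ball of `Y`. -/
theorem BJ_orthogonality_compact_operators_reflexive {𝕜 X Y : Type*} [RCLike 𝕜]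
    [NormedAddCommGroup X] [NormedSpace 𝕜 X] [CompleteSpace X]
    [NormedSpace ℝ X] [IsScalarTower ℝ 𝕜 X]
    [NormedAddCommGroup Y] [NormedSpace 𝕜 Y] [CompleteSpace Y]
    (hrefl : Function.Surjective (NormedSpace.inclusionInDoubleDual 𝕜 X))
    (T A : X →L[𝕜] Y) (hT : IsCompactOperator T) (hA : IsCompactOperator A) :
    (∀ lam : 𝕜, ‖T + lam • A‖ ≥ ‖T‖) ↔
      (0 : 𝕜) ∈ convexHull ℝ {α : 𝕜 |
        ∃ x ∈ Set.extremePoints ℝ (Metric.closedBall (0 : X) 1),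
        ∃ y ∈ Set.extremePoints ℝ (Metric.closedBall (0 : Y →L[𝕜] 𝕜) 1),
        y (T x) = (‖T‖ : 𝕜) ∧ y (A x) = α} :=
  BJ_orthogonality_compact_operators_reflexive_general hrefl T A hT hA
end

section
/- Let X be a Banach space over 𝕂 (𝕂 = ℝ or ℂ) of dimension at least two that is smooth (every nonzero element of X is a smooth point) and suppose the closed unit ball of X has a strongly exposed point. Then X does not have numerical index one; that is, there exists a bounded linear operator T : X → X with v(T) < ‖T‖, where v(T) = sup{ |x*(Tx)| : x ∈ S_X, x* ∈ S_{X*}, x*(x) = 1 } is the numerical radius of T. -/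
open Filter Topology Metric

/-! Let `f` strongly expose a smooth point `x₀` of the unit ball. A functional of norm at most one
that is nearly one at `x₀` is weak-* close to `f`, by weak-* compactness. Hence, if `(xₙ, φₙ)` are
states with `‖f xₙ‖ → 1`, then after rotation `xₙ → x₀`, and so `‖φₙ y‖ → ‖f y‖` for every `y`.
The operator `x ↦ f x • y` can therefore have numerical radius `‖y‖` only if `‖f y‖ = ‖y‖`, and in
dimension at least two `y` can be chosen in the kernel of `f`. -/

theorem exists_ne_zero_map_eq_zero_of_two_le_rank {R M : Type*} [Ring R] [StrongRankCondition R]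
    [AddCommGroup M] [Module R M] (hrank : 2 ≤ Module.rank R M) (f : M →ₗ[R] R) :
    ∃ y, y ≠ 0 ∧ f y = 0 := by
  by_contra! hker
  have hinj : Function.Injective f :=
    (injective_iff_map_eq_zero f).2 fun y hy => by_contra fun hy₀ => hker y hy₀ hy
  have hle := LinearMap.lift_rank_le_of_injective f hinj
  rw [Module.rank_self, Cardinal.lift_one, Cardinal.lift_le_one_iff] at hle
  exact absurd (hrank.trans hle) (by norm_num)

section

variable (𝕜 : Type*) {X : Type*} [RCLike 𝕜] [NormedAddCommGroup X] [NormedSpace 𝕜 X]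

/-- A smooth point of a normed space: a nonzero point with exactly one norm-one functional
attaining its norm there. -/
def IsSmoothPoint (z : X) : Prop :=
  z ≠ 0 ∧ ∃! φ : X →L[𝕜] 𝕜, ‖φ‖ = 1 ∧ φ z = (‖z‖ : 𝕜)

variable {𝕜}

/-- The functional `f` strongly exposes the point `x₀` of the closed unit ball. The normalization
`‖f‖ = 1` is part of the notion. -/
structure StronglyExposes (f : X →L[𝕜] 𝕜) (x₀ : X) : Prop where
  norm_point_le_one : ‖x₀‖ ≤ 1
  norm_eq_one : ‖f‖ = 1
  tendsto : ∀ z : ℕ → X, (∀ n, ‖z n‖ ≤ 1) →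
    Tendsto (fun n => RCLike.re (f (z n))) atTop (𝓝 1) → Tendsto z atTop (𝓝 x₀)

/-- The pair `(x, φ)` is a state: a unit vector with a norm-one functional supporting the unit ball
at it. These are the pairs over which the numerical radius is a supremum. -/
structure IsState (x : X) (φ : X →L[𝕜] 𝕜) : Prop where
  norm_vector : ‖x‖ = 1
  norm_functional : ‖φ‖ = 1
  apply_eq_one : φ x = 1

/-- The numerical radius of an operator, with value `0` when there are no states, that is, when the
space is trivial. -/
noncomputable def numericalRadius (T : X →L[𝕜] X) : ℝ :=
  sSup {r : ℝ | ∃ (x : X) (φ : X →L[𝕜] 𝕜), ‖x‖ = 1 ∧ ‖φ‖ = 1 ∧ φ x = 1 ∧ r = ‖φ (T x)‖}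

end

section

variable {𝕜 X : Type*} [RCLike 𝕜] [NormedAddCommGroup X] [NormedSpace 𝕜 X]
  {f φ : X →L[𝕜] 𝕜} {x x₀ z : X}

namespace IsSmoothPoint

theorem eq_of_norm_le_one (hz : IsSmoothPoint 𝕜 z) {ψ : X →L[𝕜] 𝕜} (hφ : ‖φ‖ ≤ 1)
    (hφz : φ z = (‖z‖ : 𝕜)) (hψ : ‖ψ‖ ≤ 1) (hψz : ψ z = (‖z‖ : 𝕜)) : φ = ψ := by
  have norm_eq_one {χ : X →L[𝕜] 𝕜} (hχ : ‖χ‖ ≤ 1) (hχz : χ z = (‖z‖ : 𝕜)) : ‖χ‖ = 1 := by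
    refine hχ.antisymm (le_of_mul_le_mul_right ?_ (norm_pos_iff.2 hz.1))
    simpa [hχz] using χ.le_opNorm z
  exact hz.2.unique ⟨norm_eq_one hφ hφz, hφz⟩ ⟨norm_eq_one hψ hψz, hψz⟩

theorem tendsto_apply {ι : Type*} {l : Filter ι} {φ : ι → X →L[𝕜] 𝕜} (hz : IsSmoothPoint 𝕜 z)
    (hf : ‖f‖ ≤ 1) (hfz : f z = (‖z‖ : 𝕜)) (hφ : ∀ i, ‖φ i‖ ≤ 1)
    (hlim : Tendsto (fun i => φ i z) l (𝓝 (‖z‖ : 𝕜))) (y : X) :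
    Tendsto (fun i => φ i y) l (𝓝 (f y)) := by
  suffices hweak : Tendsto (fun i => StrongDual.toWeakDual (φ i)) l
      (𝓝 (StrongDual.toWeakDual f)) from
    ((WeakDual.eval_continuous y).tendsto _).comp hweak
  refine (WeakDual.isCompact_closedBall (𝕜 := 𝕜) (0 : StrongDual 𝕜 X) 1)
    |>.tendsto_nhds_of_unique_mapClusterPt (Eventually.of_forall fun i => by simpa using hφ i) ?_
  intro ψ hψ hcluster
  have hψz : MapClusterPt (ψ z) l (fun i => φ i z) :=
    hcluster.continuousAt_comp (WeakDual.eval_continuous z).continuousAt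
  have hψz_eq : ψ z = (‖z‖ : 𝕜) := eq_of_nhds_neBot (hψz.clusterPt.mono hlim)
  exact hz.eq_of_norm_le_one (show ‖WeakDual.toStrongDual ψ‖ ≤ 1 by simpa using hψ)
    hψz_eq hf hfz

end IsSmoothPoint

namespace IsState

theorem inv_smul_smul (h : IsState x φ) {c : 𝕜} (hc : ‖c‖ = 1) : IsState (c • x) (c⁻¹ • φ) where
  norm_vector := by rw [norm_smul, hc, h.norm_vector, one_mul]
  norm_functional := by rw [norm_smul, norm_inv, hc, h.norm_functional, inv_one, one_mul]
  apply_eq_one := by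
    have hc₀ : c ≠ 0 := norm_ne_zero_iff.1 (by simp [hc])
    simp [h.apply_eq_one, hc₀]

theorem norm_apply_map_le (h : IsState x φ) (T : X →L[𝕜] X) : ‖φ (T x)‖ ≤ ‖T‖ := by
  simpa [h.norm_functional, h.norm_vector] using
    (φ.le_opNorm (T x)).trans (mul_le_mul_of_nonneg_left (T.le_opNorm x) (norm_nonneg φ))

theorem exists_seq_tendsto_numericalRadius (h : IsState x φ) (T : X →L[𝕜] X) :
    ∃ (u : ℕ → X) (ψ : ℕ → X →L[𝕜] 𝕜), (∀ n, IsState (u n) (ψ n)) ∧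
      Tendsto (fun n => ‖ψ n (T (u n))‖) atTop (𝓝 (numericalRadius T)) := by
  obtain ⟨r, -, hlim, hr⟩ := exists_seq_tendsto_sSup
    (S := {r : ℝ | ∃ (x : X) (φ : X →L[𝕜] 𝕜), ‖x‖ = 1 ∧ ‖φ‖ = 1 ∧ φ x = 1 ∧ r = ‖φ (T x)‖})
    ⟨_, x, φ, h.norm_vector, h.norm_functional, h.apply_eq_one, rfl⟩
    ⟨‖T‖, by rintro _ ⟨x, φ, hx, hφ, hφx, rfl⟩; exact norm_apply_map_le ⟨hx, hφ, hφx⟩ T⟩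
  choose u ψ hu hψ hψu hr using hr
  exact ⟨u, ψ, fun n => ⟨hu n, hψ n, hψu n⟩, hlim.congr hr⟩

theorem tendsto_apply_of_tendsto {ι : Type*} {l : Filter ι} {u : ι → X} {ψ : ι → X →L[𝕜] 𝕜}
    (hstate : ∀ i, IsState (u i) (ψ i)) (hu : Tendsto u l (𝓝 x₀)) :
    Tendsto (fun i => ψ i x₀) l (𝓝 1) := by
  rw [tendsto_iff_norm_sub_tendsto_zero]
  refine squeeze_zero (fun _ => norm_nonneg _) (fun i => ?_)
    (tendsto_iff_norm_sub_tendsto_zero.1 hu)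
  calc ‖ψ i x₀ - 1‖ = ‖ψ i (u i - x₀)‖ := by
        rw [map_sub, (hstate i).apply_eq_one, norm_sub_rev]
    _ ≤ ‖u i - x₀‖ := by
        simpa [(hstate i).norm_functional] using (ψ i).le_opNorm (u i - x₀)

end IsState

theorem numericalRadius_le_opNorm (T : X →L[𝕜] X) : numericalRadius T ≤ ‖T‖ :=
  Real.sSup_le
    (by rintro _ ⟨x, φ, hx, hφ, hφx, rfl⟩; exact IsState.norm_apply_map_le ⟨hx, hφ, hφx⟩ T)
    (norm_nonneg T)

namespace StronglyExposes

theorem exists_smul_tendsto (h : StronglyExposes f x₀) {u : ℕ → X} (hu : ∀ n, ‖u n‖ ≤ 1)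
    (hlim : Tendsto (fun n => ‖f (u n)‖) atTop (𝓝 1)) :
    ∃ c : ℕ → 𝕜, (∀ n, ‖c n‖ = 1) ∧ (∀ n, f (c n • u n) = (‖f (u n)‖ : 𝕜)) ∧
      Tendsto (fun n => c n • u n) atTop (𝓝 x₀) := by
  choose c hc hrot using fun n => RCLike.exists_norm_eq_mul_self (f (u n))
  have hfc : ∀ n, f (c n • u n) = (‖f (u n)‖ : 𝕜) := fun n => by simp [hrot n]
  refine ⟨c, hc, hfc, h.tendsto _ (fun n => ?_) ?_⟩
  · simpa [norm_smul, hc n] using hu n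
  · simpa only [hfc, RCLike.ofReal_re] using hlim

theorem apply_eq_one (h : StronglyExposes f x₀) : f x₀ = 1 := by
  obtain ⟨r, -, hr, hmem⟩ := exists_seq_tendsto_sSup
    ((nonempty_closedBall.2 zero_le_one).image fun x : X => ‖f x‖)
    ⟨‖f‖, by rintro _ ⟨x, hx, rfl⟩; exact f.unit_le_opNorm x (mem_closedBall_zero_iff.1 hx)⟩
  rw [f.sSup_unitClosedBall_eq_norm, h.norm_eq_one] at hr
  choose u hu hur using hmem
  have hlim : Tendsto (fun n => ‖f (u n)‖) atTop (𝓝 1) := by simpa only [hur] using hr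
  obtain ⟨c, -, hfc, hcu⟩ := h.exists_smul_tendsto (fun n => by simpa using hu n) hlim
  have hfx₀ := (f.continuous.tendsto x₀).comp hcu
  simp only [Function.comp_def, hfc] at hfx₀
  simpa using tendsto_nhds_unique hfx₀ ((RCLike.continuous_ofReal.tendsto 1).comp hlim)

theorem isState (h : StronglyExposes f x₀) : IsState x₀ f where
  norm_vector := h.norm_point_le_one.antisymm <| by
    simpa [h.apply_eq_one, h.norm_eq_one] using f.le_opNorm x₀
  norm_functional := h.norm_eq_one
  apply_eq_one := h.apply_eq_one

theorem ne_zero (h : StronglyExposes f x₀) : x₀ ≠ 0 :=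
  norm_ne_zero_iff.1 (by simp [h.isState.norm_vector])

theorem tendsto_norm_apply (h : StronglyExposes f x₀) (hx₀ : IsSmoothPoint 𝕜 x₀) {u : ℕ → X}
    {φ : ℕ → X →L[𝕜] 𝕜} (hstate : ∀ n, IsState (u n) (φ n))
    (hlim : Tendsto (fun n => ‖f (u n)‖) atTop (𝓝 1)) (y : X) :
    Tendsto (fun n => ‖φ n y‖) atTop (𝓝 ‖f y‖) := by
  obtain ⟨c, hc, -, hcu⟩ := h.exists_smul_tendsto (fun n => (hstate n).norm_vector.le) hlim
  have hrot : ∀ n, IsState (c n • u n) ((c n)⁻¹ • φ n) := fun n => (hstate n).inv_smul_smul (hc n)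
  have hy : Tendsto (fun n => ((c n)⁻¹ • φ n) y) atTop (𝓝 (f y)) :=
    hx₀.tendsto_apply h.norm_eq_one.le (by simp [h.isState.norm_vector, h.apply_eq_one])
      (fun n => (hrot n).norm_functional.le)
      (by simpa [h.isState.norm_vector] using IsState.tendsto_apply_of_tendsto hrot hcu) y
  simpa [hc] using hy.norm

theorem numericalRadius_smulRight_lt (h : StronglyExposes f x₀) (hx₀ : IsSmoothPoint 𝕜 x₀) {y : X}
    (hy : ‖f y‖ < ‖y‖) : numericalRadius (f.smulRight y) < ‖f.smulRight y‖ := by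
  refine (numericalRadius_le_opNorm _).lt_of_ne fun heq => hy.ne ?_
  obtain ⟨u, φ, hstate, hlim⟩ := h.isState.exists_seq_tendsto_numericalRadius (f.smulRight y)
  have hprod : Tendsto (fun n => ‖f (u n)‖ * ‖φ n y‖) atTop (𝓝 ‖y‖) := by
    simpa [heq, h.norm_eq_one] using hlim
  have hy₀ : 0 < ‖y‖ := (norm_nonneg _).trans_lt hy
  have hfu : Tendsto (fun n => ‖f (u n)‖) atTop (𝓝 1) := by
    have hlower : Tendsto (fun n => ‖f (u n)‖ * ‖φ n y‖ / ‖y‖) atTop (𝓝 1) := by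
      simpa [hy₀.ne'] using hprod.div_const ‖y‖
    refine tendsto_of_tendsto_of_tendsto_of_le_of_le hlower tendsto_const_nhds (fun n => ?_)
      (fun n => ?_)
    · refine (div_le_iff₀ hy₀).2 (mul_le_mul_of_nonneg_left ?_ (norm_nonneg _))
      simpa [(hstate n).norm_functional] using (φ n).le_opNorm y
    · simpa [h.norm_eq_one, (hstate n).norm_vector] using f.le_opNorm (u n)
  have hprod' : Tendsto (fun n => ‖f (u n)‖ * ‖φ n y‖) atTop (𝓝 ‖f y‖) := by
    simpa using hfu.mul (h.tendsto_norm_apply hx₀ hstate hfu y)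
  exact tendsto_nhds_unique hprod' hprod

end StronglyExposes

theorem smooth_space_with_strongly_exposed_point_not_numerical_index_one_general
    (hdim : 2 ≤ Module.rank 𝕜 X) (hexp : StronglyExposes f x₀) (hsmooth : IsSmoothPoint 𝕜 x₀) :
    ∃ T : X →L[𝕜] X, numericalRadius T < ‖T‖ := by
  obtain ⟨y, hy, hfy⟩ := exists_ne_zero_map_eq_zero_of_two_le_rank hdim f.toLinearMap
  have hlt : ‖f y‖ < ‖y‖ := by simpa [show f y = 0 from hfy] using hy
  exact ⟨f.smulRight y, hexp.numericalRadius_smulRight_lt hsmooth hlt⟩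

end

/-- A smooth Banach space of dimension at least two whose closed unit ball contains a strongly
exposed point does not have numerical index one: some operator has numerical radius strictly
smaller than its norm. -/
theorem smooth_space_with_strongly_exposed_point_not_numerical_index_one
    {𝕜 X : Type*} [RCLike 𝕜] [NormedAddCommGroup X] [NormedSpace 𝕜 X] [CompleteSpace X]
    (hdim : 2 ≤ Module.rank 𝕜 X)
    (hsmooth : ∀ z : X, z ≠ 0 → ∃! φ : X →L[𝕜] 𝕜, ‖φ‖ = 1 ∧ φ z = (‖z‖ : 𝕜))
    (hexp : ∃ x₀ ∈ Metric.closedBall (0 : X) 1, ∃ f : X →L[𝕜] 𝕜, ‖f‖ = 1 ∧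
      ∀ z : ℕ → X, (∀ n, z n ∈ Metric.closedBall (0 : X) 1) →
        Tendsto (fun n => RCLike.re (f (z n))) atTop (𝓝 1) →
        Tendsto z atTop (𝓝 x₀)) :
    ∃ T : X →L[𝕜] X,
      sSup {r : ℝ | ∃ (x : X) (φ : X →L[𝕜] 𝕜),
        ‖x‖ = 1 ∧ ‖φ‖ = 1 ∧ φ x = 1 ∧ r = ‖φ (T x)‖} < ‖T‖ := by
  obtain ⟨x₀, hx₀, f, hf, htendsto⟩ := hexp
  simp only [mem_closedBall_zero_iff] at hx₀ htendsto
  have hexposes : StronglyExposes f x₀ := ⟨hx₀, hf, htendsto⟩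
  exact smooth_space_with_strongly_exposed_point_not_numerical_index_one_general hdim hexposes
    ⟨hexposes.ne_zero, hsmooth x₀ hexposes.ne_zero⟩
end
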